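/- arXiv:math/0512182 — 2 statements merged into one kernel-verified Lean document; each statement's English description precedes it below -/
import Mathlib

section
/- Let Λ be a free ℤ-module of rank 4, and let V = Λ/2Λ, a 4-dimensional vector space over 𝔽₂. Let G be a group acting linearly on Λ (hence on V and its exterior powers). Suppose the fixed subspace of G on V has dimension at least 2 (containing linearly independent e₁, e₂) and the fixed subspace of G on ∧²V has dimension at least 2. Then the fixed subspace of G on ∧³V is nonzero. -/
/-!
Let `A` be the subalgebra of fixed elements of the exterior algebra, and let `e₁, …, eₙ` be
independent fixed vectors. If `x ∈ ∧ⁿV ∩ A`, then each `eᵢ ∧ x` lies in `∧ⁿ⁺¹V ∩ A`. If that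
intersection vanishes, then every `eᵢ` annihilates `x`, so one can split off the factors `eᵢ` of `x`
one at a time by contracting with a dual family of linear forms. Hence `x` is a scalar multiple of
`e₁ ∧ ⋯ ∧ eₙ`, and `∧ⁿV ∩ A` is at most a line.
-/

open ExteriorAlgebra
open CliffordAlgebra (contractLeft contractLeft_ι contractLeft_ι_mul)

section Contraction

variable {R M : Type*} [CommRing R] [AddCommGroup M] [Module R M]

theorem contractLeft_mem_exteriorPower (d : Module.Dual R M) {k : ℕ} {x : ExteriorAlgebra R M}
    (hx : x ∈ ⋀[R]^(k + 1) M) : contractLeft d x ∈ ⋀[R]^k M := by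
  induction k generalizing x with
  | zero =>
    obtain ⟨v, rfl⟩ : x ∈ LinearMap.range (ι R) := by simpa only [zero_add, pow_one] using hx
    rw [contractLeft_ι, exteriorPower, pow_zero]
    exact Submodule.algebraMap_mem (d v)
  | succ k ih =>
    rw [exteriorPower, pow_succ'] at hx
    induction hx using Submodule.mul_induction_on' with
    | mem_mul_mem u hu y hy =>
      obtain ⟨v, rfl⟩ := hu
      rw [contractLeft_ι_mul]
      have hvy : ι R v * contractLeft d y ∈ ⋀[R]^(k + 1) M := by
        rw [exteriorPower, pow_succ']
        exact Submodule.mul_mem_mul ⟨v, rfl⟩ (ih hy)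
      exact sub_mem (Submodule.smul_mem _ _ hy) hvy
    | add y _ z _ hy hz =>
      rw [map_add]
      exact add_mem hy hz

theorem eq_ι_mul_contractLeft_of_ι_mul_eq_zero {d : Module.Dual R M} {v : M} (hd : d v = 1)
    {x : ExteriorAlgebra R M} (hx : ι R v * x = 0) : x = ι R v * contractLeft d x := by
  have h := contractLeft_ι_mul d v x
  rw [hx, map_zero, hd, one_smul] at h
  exact sub_eq_zero.mp h.symm

theorem ι_mul_contractLeft_eq_zero {d : Module.Dual R M} {v : M} (hd : d v = 0)
    {x : ExteriorAlgebra R M} (hx : ι R v * x = 0) : ι R v * contractLeft d x = 0 := by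
  have h := contractLeft_ι_mul d v x
  rw [hx, map_zero, hd, zero_smul, zero_sub] at h
  exact neg_eq_zero.mp h.symm

theorem exists_eq_ιMulti_mul_of_forall_ι_mul_eq_zero {n m : ℕ} {e : Fin n → M}
    {d : Fin n → Module.Dual R M} (hd₀ : Pairwise fun i j ↦ d i (e j) = 0)
    (hd₁ : ∀ i, d i (e i) = 1) {x : ExteriorAlgebra R M} (hx : x ∈ ⋀[R]^(m + n) M)
    (hex : ∀ i, ι R (e i) * x = 0) : ∃ y ∈ ⋀[R]^m M, x = ιMulti R n e * y := by
  induction n generalizing x with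
  | zero => exact ⟨x, hx, by rw [ιMulti_zero_apply, one_mul]⟩
  | succ n ih =>
    have hex' (i : Fin n) : ι R (e i.succ) * contractLeft (d 0) x = 0 :=
      ι_mul_contractLeft_eq_zero (hd₀ (Fin.succ_ne_zero i).symm) (hex i.succ)
    obtain ⟨y, hy, hxy⟩ := ih (hd₀.comp_of_injective (Fin.succ_injective n)) (fun i ↦ hd₁ i.succ)
      (contractLeft_mem_exteriorPower (d 0) hx) hex'
    refine ⟨y, hy, ?_⟩
    calc x = ι R (e 0) * contractLeft (d 0) x :=
          eq_ι_mul_contractLeft_of_ι_mul_eq_zero (hd₁ 0) (hex 0)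
      _ = ι R (e 0) * (ιMulti R n (fun i ↦ e i.succ) * y) := congrArg _ hxy
      _ = ιMulti R (n + 1) e * y := by rw [ιMulti_succ_apply, mul_assoc]; rfl

end Contraction

theorem iInf_ker_sub_id_eq_toSubmodule_iInf_equalizer {ι R A : Type*} [CommRing R] [Ring A]
    [Algebra R A] (φ : ι → A →ₐ[R] A) :
    ⨅ i, LinearMap.ker ((φ i).toLinearMap - LinearMap.id) =
      Subalgebra.toSubmodule (⨅ i, AlgHom.equalizer (φ i) (AlgHom.id R A)) := by
  ext x
  simp [sub_eq_zero]

section Field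

variable {K V : Type*} [Field K] [AddCommGroup V] [Module K V]

theorem exists_dual_pairwise_eq_zero_one {I : Type*} {e : I → V} (he : LinearIndependent K e) :
    ∃ d : I → Module.Dual K V, (Pairwise fun i j ↦ d i (e j) = 0) ∧ ∀ i, d i (e i) = 1 := by
  obtain ⟨g, hg⟩ := LinearMap.exists_leftInverse_of_injective (Finsupp.linearCombination K e)
    (LinearMap.ker_eq_bot.mpr he)
  have hge (j : I) : g (e j) = Finsupp.single j 1 := by
    simpa using LinearMap.congr_fun hg (Finsupp.single j 1)
  exact ⟨fun i ↦ Finsupp.lapply i ∘ₗ g, fun i j hij ↦ by simp [hge, hij.symm],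
    fun i ↦ by simp [hge]⟩

theorem mem_span_ιMulti_of_forall_ι_mul_eq_zero {n : ℕ} {e : Fin n → V}
    (he : LinearIndependent K e) {x : ExteriorAlgebra K V} (hx : x ∈ ⋀[K]^n V)
    (hex : ∀ i, ι K (e i) * x = 0) : x ∈ Submodule.span K {ιMulti K n e} := by
  obtain ⟨d, hd₀, hd₁⟩ := exists_dual_pairwise_eq_zero_one he
  obtain ⟨y, hy, rfl⟩ := exists_eq_ιMulti_mul_of_forall_ι_mul_eq_zero (m := 0) hd₀ hd₁
    (by rwa [zero_add]) hex
  obtain ⟨c, rfl⟩ := Submodule.mem_one.mp hy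
  rw [← Algebra.commutes, ← Algebra.smul_def]
  exact Submodule.smul_mem _ c (Submodule.mem_span_singleton_self _)

theorem exists_linearIndependent_ι_mem {n : ℕ} {W : Submodule K (ExteriorAlgebra K V)}
    (hn : n ≤ Module.rank K ↥(⋀[K]^1 V ⊓ W)) :
    ∃ e : Fin n → V, LinearIndependent K e ∧ ∀ i, ι K (e i) ∈ W := by
  obtain ⟨y, hy⟩ := exists_linearIndependent_of_le_rank hn
  have hι (i : Fin n) : (y i : ExteriorAlgebra K V) ∈ LinearMap.range (ι K) :=
    (pow_one (LinearMap.range (ι K))).le (y i).2.1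
  choose e he using hι
  refine ⟨e, .of_comp (ι K) ?_, fun i ↦ he i ▸ (y i).2.2⟩
  rw [show ι K ∘ e = (⋀[K]^1 V ⊓ W).subtype ∘ y from funext he]
  exact hy.map' _ (Submodule.ker_subtype _)

theorem fixed_wedge_three_nonzero_general (n : ℕ) (A : Subalgebra K (ExteriorAlgebra K V))
    (h₁ : n ≤ Module.rank K ↥(⋀[K]^1 V ⊓ A.toSubmodule))
    (hn : 1 < Module.rank K ↥(⋀[K]^n V ⊓ A.toSubmodule)) :
    ⋀[K]^(n + 1) V ⊓ A.toSubmodule ≠ ⊥ := by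
  intro hbot
  obtain ⟨e, he, heA⟩ := exists_linearIndependent_ι_mem h₁
  have hle : ⋀[K]^n V ⊓ A.toSubmodule ≤ Submodule.span K {ιMulti K n e} := by
    rintro x ⟨hxn, hxA⟩
    refine mem_span_ιMulti_of_forall_ι_mul_eq_zero he hxn fun i ↦
      (Submodule.eq_bot_iff _).mp hbot _ ⟨?_, A.mul_mem (heA i) hxA⟩
    rw [exteriorPower, pow_succ']
    exact Submodule.mul_mem_mul ⟨e i, rfl⟩ hxn
  refine hn.not_ge ?_
  calc Module.rank K ↥(⋀[K]^n V ⊓ A.toSubmodule)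
      ≤ Module.rank K (Submodule.span K {ιMulti K n e}) := Submodule.rank_mono hle
    _ ≤ 1 := (rank_span_le _).trans_eq (Cardinal.mk_singleton _)

end Field

/-- Let V be the 4-dimensional 𝔽₂-vector space Λ/2Λ (Λ free of rank 4)
with a linear action of a group G.  If the fixed subspace of G on V has dimension ≥ 2
and the fixed subspace of G on ∧²V has dimension ≥ 2, then the fixed subspace of G on
∧³V is nonzero.  (Exterior powers realized as the graded pieces of the exterior
algebra.) -/
theorem fixed_wedge_three_nonzero {G V : Type*} [Group G] [AddCommGroup V]
    [Module (ZMod 2) V] [Module.Finite (ZMod 2) V]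
    (hdim : Module.finrank (ZMod 2) V = 4)
    (ρ : G →* (V ≃ₗ[ZMod 2] V)) :
    ∀ piece : ℕ → Submodule (ZMod 2) (ExteriorAlgebra (ZMod 2) V),
      (piece = fun n =>
        (LinearMap.range (ExteriorAlgebra.ι (ZMod 2) : V →ₗ[ZMod 2] _)) ^ n) →
    ∀ fixed : Submodule (ZMod 2) (ExteriorAlgebra (ZMod 2) V),
      (fixed = ⨅ g : G, LinearMap.ker
        ((ExteriorAlgebra.map (ρ g).toLinearMap).toLinearMap - LinearMap.id)) →
      2 ≤ Module.finrank (ZMod 2) ↥(piece 1 ⊓ fixed) →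
      2 ≤ Module.finrank (ZMod 2) ↥(piece 2 ⊓ fixed) →
      piece 3 ⊓ fixed ≠ ⊥ := by
  rintro _ rfl _ rfl h₁ h₂
  rw [iInf_ker_sub_id_eq_toSubmodule_iInf_equalizer fun g ↦
    ExteriorAlgebra.map (ρ g).toLinearMap] at h₁ h₂ ⊢
  exact fixed_wedge_three_nonzero_general 2 _
    (natCast_le_rank_iff.mpr (exists_linearIndependent_of_le_finrank h₁))
    (Module.one_lt_rank_of_one_lt_finrank h₂)
end

section
/- Let e₁, e₂ be linearly independent vectors in a 4-dimensional vector space V over a field, and let f ∈ ∧²V be an element not in the span of e₁∧e₂. Then e₁∧f ≠ 0 or e₂∧f ≠ 0 in ∧³V. -/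
/-!
Contraction by a functional `d` is an antiderivation of the exterior algebra, so `v ∧ f = 0` gives
`0 = d ⌋ (v ∧ f) = d v • f - v ∧ (d ⌋ f)`. If `d v = 1`, then `v` divides `f` with quotient `d ⌋ f`;
if `d v = 0`, then `v` annihilates `d ⌋ f` as well. Contracting `f` successively by functionals dual
to `v₁, …, vₙ` therefore splits off the whole product `v₁ ∧ ⋯ ∧ vₙ`, and when `f` has degree `n`
the remaining factor is a scalar.
-/

open ExteriorAlgebra Module
open CliffordAlgebra (contractLeft contractLeft_algebraMap contractLeft_ι_mul)

section Contraction

variable {R M : Type*} [CommRing R] [AddCommGroup M] [Module R M]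

theorem contractLeft_mem_exteriorPower_s7 (d : Dual R M) {n : ℕ} {f : ExteriorAlgebra R M}
    (hf : f ∈ ⋀[R]^(n + 1) M) : contractLeft d f ∈ ⋀[R]^n M := by
  rw [exteriorPower, pow_succ'] at hf
  induction hf using Submodule.mul_induction_on' with
  | mem_mul_mem x hx y hy =>
    obtain ⟨v, rfl⟩ := hx
    rw [contractLeft_ι_mul]
    refine sub_mem (Submodule.smul_mem _ _ hy) ?_
    cases n with
    | zero =>
      obtain ⟨c, rfl⟩ := Submodule.mem_one.1 hy
      simp only [contractLeft_algebraMap, mul_zero, zero_mem]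
    | succ n =>
      rw [exteriorPower, pow_succ']
      exact Submodule.mul_mem_mul ⟨v, rfl⟩ (contractLeft_mem_exteriorPower_s7 d hy)
  | add x _ y _ hx hy => simpa only [map_add] using add_mem hx hy

theorem ι_mul_contractLeft_of_ι_mul_eq_zero (d : Dual R M) {v : M} {f : ExteriorAlgebra R M}
    (hf : ι R v * f = 0) : ι R v * contractLeft d f = d v • f := by
  have h := contractLeft_ι_mul d v f
  rwa [hf, map_zero, eq_comm, sub_eq_zero, eq_comm] at h

theorem exists_eq_ιMulti_mul_of_ι_mul_eq_zero {m n : ℕ} {v : Fin n → M} {d : Fin n → Dual R M}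
    (hd_self : ∀ i, d i (v i) = 1) (hd_lt : ∀ i j, i < j → d i (v j) = 0)
    {f : ExteriorAlgebra R M} (hf : f ∈ ⋀[R]^(m + n) M) (hvf : ∀ i, ι R (v i) * f = 0) :
    ∃ g ∈ ⋀[R]^m M, f = ιMulti R n v * g := by
  induction n generalizing f with
  | zero => exact ⟨f, hf, by rw [ιMulti_zero_apply, one_mul]⟩
  | succ n ih =>
    have hf_eq : ι R (v 0) * contractLeft (d 0) f = f := by
      rw [ι_mul_contractLeft_of_ι_mul_eq_zero _ (hvf 0), hd_self, one_smul]
    have htail (i : Fin n) : ι R (v i.succ) * contractLeft (d 0) f = 0 := by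
      rw [ι_mul_contractLeft_of_ι_mul_eq_zero _ (hvf i.succ), hd_lt _ _ i.succ_pos, zero_smul]
    obtain ⟨g, hg, hfg⟩ := ih (v := Matrix.vecTail v) (d := Matrix.vecTail d)
      (fun i => hd_self i.succ) (fun i j hij => hd_lt _ _ (Fin.succ_lt_succ_iff.2 hij))
      (contractLeft_mem_exteriorPower_s7 (d 0) hf) htail
    exact ⟨g, hg, by rw [ιMulti_succ_apply, mul_assoc, ← hfg, hf_eq]⟩

theorem mem_span_ιMulti_of_ι_mul_eq_zero {n : ℕ} {v : Fin n → M} {d : Fin n → Dual R M}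
    (hd_self : ∀ i, d i (v i) = 1) (hd_lt : ∀ i j, i < j → d i (v j) = 0)
    {f : ExteriorAlgebra R M} (hf : f ∈ ⋀[R]^n M) (hvf : ∀ i, ι R (v i) * f = 0) :
    f ∈ Submodule.span R {ιMulti R n v} := by
  obtain ⟨g, hg, rfl⟩ := exists_eq_ιMulti_mul_of_ι_mul_eq_zero (m := 0) hd_self hd_lt
    (by rwa [zero_add]) hvf
  obtain ⟨c, rfl⟩ := Submodule.mem_one.1 hg
  exact Submodule.mem_span_singleton.2 ⟨c, by rw [Algebra.smul_def, Algebra.commutes]⟩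

end Contraction

theorem exists_dual_apply_eq_single_of_linearIndependent {I k V : Type*} [DecidableEq I] [Field k]
    [AddCommGroup V] [Module k V] {v : I → V} (hv : LinearIndependent k v) (i : I) :
    ∃ d : Dual k V, ∀ j, d (v j) = (Pi.single i 1 : I → k) j := by
  obtain ⟨d, hd⟩ := LinearMap.exists_extend (Finsupp.lapply i ∘ₗ hv.repr)
  refine ⟨d, fun j => ?_⟩
  have hj := LinearMap.congr_fun hd ⟨v j, Submodule.subset_span ⟨j, rfl⟩⟩
  rw [LinearMap.comp_apply, LinearMap.comp_apply, hv.repr_eq_single j _ rfl] at hj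
  simpa [Finsupp.single_apply, Pi.single_apply] using hj

theorem wedge_nonzero_general {k V : Type*} [Field k] [AddCommGroup V] [Module k V] {n : ℕ}
    {v : Fin n → V} (hv : LinearIndependent k v) {f : ExteriorAlgebra k V} (hf : f ∈ ⋀[k]^n V)
    (hfspan : f ∉ Submodule.span k {ιMulti k n v}) :
    ∃ i, ι k (v i) * f ≠ 0 := by
  by_contra! hvf
  choose d hd using exists_dual_apply_eq_single_of_linearIndependent hv
  refine hfspan (mem_span_ιMulti_of_ι_mul_eq_zero (d := d) (fun i => ?_) (fun i j hij => ?_) hf hvf)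
  · rw [hd, Pi.single_eq_same]
  · rw [hd, Pi.single_eq_of_ne hij.ne']

/-- If e₁, e₂ are linearly independent in a 4-dimensional vector space V
over a field and f ∈ ∧²V is not in the span of e₁∧e₂, then e₁∧f ≠ 0 or e₂∧f ≠ 0 in ∧³V.
(∧²V realized as the degree-2 graded piece of the exterior algebra.) -/
theorem wedge_nonzero {k V : Type*} [Field k] [AddCommGroup V] [Module k V]
    [Module.Finite k V] (hdim : Module.finrank k V = 4)
    (e₁ e₂ : V) (hli : LinearIndependent k ![e₁, e₂])
    (f : ExteriorAlgebra k V)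
    (hf2 : f ∈ (LinearMap.range (ExteriorAlgebra.ι k : V →ₗ[k] _)) ^ 2)
    (hfspan : f ∉ Submodule.span k {ExteriorAlgebra.ι k e₁ * ExteriorAlgebra.ι k e₂}) :
    ExteriorAlgebra.ι k e₁ * f ≠ 0 ∨ ExteriorAlgebra.ι k e₂ * f ≠ 0 := by
  simpa [Fin.exists_fin_two] using
    wedge_nonzero_general hli hf2 (by simpa [ιMulti_apply] using hfspan)
end
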